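/- For all finite trees Ψ and T there exists a bicyclic graph Δ such that Aut(Δ) ≅ Aut(Ψ) × (Aut(T) ≀ (Z₂ × Z₂)), where Aut(T) ≀ (Z₂ × Z₂) = Aut(T)⁴ ⋊ (Z₂ × Z₂) with Z₂ × Z₂ permuting the four coordinates (indexed by its own elements) by translation. -/

import Mathlib

open SimpleGraph

/-- The automorphism of `ι → G` given by permuting coordinates by `σ`. -/
def permAut {ι G : Type} [Group G] (σ : Equiv.Perm ι) : MulAut (ι → G) where
  toFun f := f ∘ σ.symm
  invFun f := f ∘ σ
  left_inv f := by funext i; simp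
  right_inv f := by funext i; simp
  map_mul' f g := rfl

/-- The action of `Equiv.Perm ι` on `ι → G` by permuting coordinates, as a homomorphism. -/
def permHom (ι G : Type) [Group G] : Equiv.Perm ι →* MulAut (ι → G) where
  toFun := permAut
  map_one' := by ext f i; rfl
  map_mul' σ τ := by ext f i; rfl

/-- Combine two actions-by-automorphisms into one on the direct product. -/
def autProdHom {Q M N : Type} [Group Q] [Group M] [Group N]
    (φ : Q →* MulAut M) (ψ : Q →* MulAut N) : Q →* MulAut (M × N) where
  toFun q := (φ q).prodCongr (ψ q)
  map_one' := by
    show MulEquiv.prodCongr (φ 1) (ψ 1) = 1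
    rw [map_one, map_one]; ext x <;> rfl
  map_mul' a b := by
    show MulEquiv.prodCongr (φ (a * b)) (ψ (a * b)) = _
    rw [map_mul, map_mul]; ext x <;> rfl

/-- The translation action of an additive group on itself, as permutations. -/
def transPermHom (A : Type) [AddGroup A] : Multiplicative A →* Equiv.Perm A :=
  MulAction.toPermHom (Multiplicative A) A

/-- The action of (the multiplicative version of) an additive group `A` on `A → G`
by translating the coordinates. -/
def transAutHom (A G : Type) [AddGroup A] [Group G] : Multiplicative A →* MulAut (A → G) :=
  (permHom A G).comp (transPermHom A)

/-- The Klein four-group `Z₂ × Z₂` (written multiplicatively). -/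
abbrev K4 : Type := Multiplicative (ZMod 2 × ZMod 2)

/-- Projection of the Klein four-group onto its first `Z₂` factor. -/
def fstK : K4 →* Multiplicative (ZMod 2) :=
  AddMonoidHom.toMultiplicative (AddMonoidHom.fst (ZMod 2) (ZMod 2))

/-- Projection of the Klein four-group onto its second `Z₂` factor. -/
def sndK : K4 →* Multiplicative (ZMod 2) :=
  AddMonoidHom.toMultiplicative (AddMonoidHom.snd (ZMod 2) (ZMod 2))

/-- The wreath product `D ≀ (Z₂ × Z₂) = D⁴ ⋊ (Z₂ × Z₂)`: the four coordinates are indexed by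
the elements of `Z₂ × Z₂`, which acts by translating the indices. -/
def wreathK4 (D : Type) [Group D] : Type :=
  (ZMod 2 × ZMod 2 → D) ⋊[transAutHom (ZMod 2 × ZMod 2) D] K4

instance (D : Type) [Group D] : Group (wreathK4 D) :=
  inferInstanceAs (Group (_ ⋊[transAutHom (ZMod 2 × ZMod 2) D] K4))

/-- A graph is bicyclic if it is connected and its number of edges exceeds its number of
vertices by exactly one (i.e. it has cyclomatic number 2). -/
def SimpleGraph.IsBicyclic {V : Type} (G : SimpleGraph V) : Prop :=
  G.Connected ∧ G.edgeSet.ncard = Nat.card V + 1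

/-!
The automorphism group of a finite tree `T` is that of a rooted tree: its center is a clique, and
replacing that clique by a star around a new vertex makes the new vertex a canonical root.

Hang the rooted trees so obtained on the theta graph with paths of lengths 2, 3 and 3 between its
two hubs: the one for `Ψ` at the inner vertex of the short path, and a copy of the one for `T` at
each of the four inner vertices of the long paths. The automorphism group of the theta graph is
`Z₂ × Z₂`; it fixes the former vertex and acts simply transitively on the latter four. Hanging
trees adds as many edges as vertices, so the result is bicyclic. The theta graph is recovered from
it as the largest set of vertices each having two neighbors in the set, so every automorphism
permutes the hung trees along an automorphism of the theta graph.
-/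

section TreeMetric

variable {V W : Type*} {G : SimpleGraph V} {H : SimpleGraph W} {x y z b u : V}

theorem dist_lt_of_mem_geodesic_support {p : G.Walk x u} (hp : p.length = G.dist x u)
    (hb : b ∈ p.support) (hbx : b ≠ x) : G.dist b u < G.dist x u := by
  classical
  calc G.dist b u ≤ (p.dropUntil b hb).length := dist_le _
    _ < p.length := Walk.length_dropUntil_lt_length hb hbx
    _ = G.dist x u := hp

/- The walk from `x` to `y` through `u` along geodesics contains the unique path from `x` to `y`,
so `b` lies on one of the two geodesics. -/
theorem dist_lt_or_dist_lt_of_mem_path_support (hG : G.IsTree) {p : G.Walk x y} (hp : p.IsPath)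
    (hb : b ∈ p.support) (hbx : b ≠ x) (hby : b ≠ y) (u : V) :
    G.dist b u < G.dist x u ∨ G.dist b u < G.dist y u := by
  classical
  obtain ⟨q, hq⟩ := hG.connected.exists_walk_length_eq_dist x u
  obtain ⟨r, hr⟩ := hG.connected.exists_walk_length_eq_dist y u
  have path_eq : p = (q.append r.reverse).bypass :=
    congrArg Subtype.val <|
      (hG.isAcyclic.subsingleton_path x y).elim ⟨p, hp⟩ ⟨_, Walk.bypass_isPath _⟩
  have hbqr : b ∈ (q.append r.reverse).support :=
    Walk.support_bypass_subset_support _ (path_eq ▸ hb)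
  rw [Walk.mem_support_append_iff, Walk.support_reverse, List.mem_reverse] at hbqr
  exact hbqr.imp (dist_lt_of_mem_geodesic_support hq · hbx)
    (dist_lt_of_mem_geodesic_support hr · hby)

theorem dist_lt_or_dist_lt_of_adj_of_adj (hG : G.IsTree) (hxy : G.Adj x y) (hxz : G.Adj x z)
    (hyz : y ≠ z) (u : V) : G.dist x u < G.dist y u ∨ G.dist x u < G.dist z u := by
  have path : (Walk.cons hxy.symm (Walk.cons hxz Walk.nil)).IsPath := by
    simp [hyz, hxy.ne', hxz.ne]
  exact dist_lt_or_dist_lt_of_mem_path_support hG path (by simp) hxy.ne hxz.ne u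

theorem isClique_center_of_isTree [Finite V] (hG : G.IsTree) : G.IsClique G.center := by
  intro x hx y hy hxy
  by_contra hadj
  obtain ⟨p, hp, -⟩ := hG.connected.exists_path_of_dist x y
  have hp_nil : ¬p.Nil := fun h => hxy h.eq
  have hby : p.snd ≠ y := fun h => hadj (h ▸ p.adj_snd hp_nil)
  obtain ⟨u, hu⟩ := G.exists_edist_eq_eccent_of_finite p.snd
  have closer_to_center : ∀ w ∈ G.center, ¬G.dist p.snd u < G.dist w u := by
    intro w hw hlt
    have edist_lt : G.edist p.snd u < G.edist w u := by
      rw [← (hG.connected p.snd u).coe_dist_eq_edist, ← (hG.connected w u).coe_dist_eq_edist]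
      exact_mod_cast hlt
    have : G.eccent w < G.eccent w := calc
      G.eccent w = G.radius := hw
      _ ≤ G.eccent p.snd := radius_le_eccent
      _ = G.edist p.snd u := hu.symm
      _ < G.edist w u := edist_lt
      _ ≤ G.eccent w := edist_le_eccent
    exact this.false
  rcases dist_lt_or_dist_lt_of_mem_path_support hG hp (p.getVert_mem_support 1)
    (p.adj_snd hp_nil).ne' hby u with h | h
  · exact closer_to_center x hx h
  · exact closer_to_center y hy h

theorem edist_map_le (f : G →g H) (x y : V) : H.edist (f x) (f y) ≤ G.edist x y := by
  refine le_iInf fun p => ?_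
  simpa using edist_le (p.map f)

theorem edist_map_iso (f : G ≃g H) (x y : V) : H.edist (f x) (f y) = G.edist x y :=
  (edist_map_le f.toHom x y).antisymm (by simpa using edist_map_le f.symm.toHom (f x) (f y))

theorem eccent_map_iso (f : G ≃g H) (x : V) : H.eccent (f x) = G.eccent x :=
  (f.toEquiv.iSup_congr (edist_map_iso f x)).symm

theorem radius_eq_of_iso (f : G ≃g H) : H.radius = G.radius :=
  (f.toEquiv.iInf_congr (eccent_map_iso f)).symm

theorem map_mem_center_iff (f : G ≃g H) (x : V) : f x ∈ H.center ↔ x ∈ G.center := by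
  rw [mem_center_iff, mem_center_iff, eccent_map_iso, radius_eq_of_iso f]

theorem subset_singleton_of_two_neighbors [Finite V] (hG : G.IsTree) (r : V) {S : Set V}
    (hS : ∀ x ∈ S, x ≠ r → ∃ y ∈ S, ∃ z ∈ S, y ≠ z ∧ G.Adj x y ∧ G.Adj x z) : S ⊆ {r} := by
  by_contra hsub
  obtain ⟨x, ⟨hxS, hxr⟩, hmax⟩ := (S \ {r}).toFinite.exists_maximalFor (G.dist · r) _
    (Set.sdiff_nonempty.mpr hsub)
  obtain ⟨y, hy, z, hz, hyz, hxy, hxz⟩ := hS x hxS hxr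
  have not_farther : ∀ w ∈ S, ¬G.dist x r < G.dist w r := by
    intro w hw hlt
    have hwr : w ≠ r := by
      rintro rfl
      simp at hlt
    exact hlt.not_ge (hmax ⟨hw, hwr⟩ hlt.le)
  exact (dist_lt_or_dist_lt_of_adj_of_adj hG hxy hxz hyz r).elim
    (not_farther y hy) (not_farther z hz)

end TreeMetric

universe u

/-- A graph with a distinguished vertex. -/
structure RootedGraph where
  V : Type u
  graph : SimpleGraph V
  root : V

/-- The group of automorphisms of a rooted graph, i.e. those fixing the root. -/
abbrev RootedGraph.Aut (G : RootedGraph) : Subgroup (G.graph ≃g G.graph) :=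
  MulAction.stabilizer _ G.root

section StarReplace

variable {V : Type u} {T : SimpleGraph V} {M : Set V}

/-- Delete the edges of `T` inside `M` and join a new root, encoded as `none`, to the vertices
of `M`. If `M` is the center of a finite tree, this either attaches a pendant vertex to the central
vertex or subdivides the central edge. -/
abbrev starReplace (T : SimpleGraph V) (M : Set V) : RootedGraph where
  V := Option V
  graph :=
    { Adj
        | none, none => False
        | none, some y => y ∈ M
        | some x, none => x ∈ M
        | some x, some y => T.Adj x y ∧ ¬(x ∈ M ∧ y ∈ M)
      symm := ⟨by
        rintro (_ | x) (_ | y) h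
        · exact h
        · exact h
        · exact h
        · exact ⟨h.1.symm, fun h' => h.2 h'.symm⟩⟩
      loopless := ⟨by
        rintro (_ | x) h
        · exact h
        · exact h.1.ne rfl⟩ }
  root := none

theorem starReplace_reachable_some (hT : T.Connected) (x y : V) :
    (starReplace T M).graph.Reachable (some x) (some y) := by
  obtain ⟨p⟩ := hT x y
  induction p with
  | nil => rfl
  | @cons x z y hxz _ ih =>
    refine Reachable.trans ?_ ih
    by_cases hM : x ∈ M ∧ z ∈ M
    · have hx : (starReplace T M).graph.Adj (some x) none := hM.1
      have hz : (starReplace T M).graph.Adj none (some z) := hM.2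
      exact hx.reachable.trans hz.reachable
    · have hxz' : (starReplace T M).graph.Adj (some x) (some z) := ⟨hxz, hM⟩
      exact hxz'.reachable

theorem starReplace_connected (hT : T.Connected) (hM : M.Nonempty) :
    (starReplace T M).graph.Connected := by
  obtain ⟨m, hm⟩ := hM
  have hm_root : (starReplace T M).graph.Adj (some m) none := hm
  refine (connected_iff_exists_forall_reachable _).mpr ⟨some m, ?_⟩
  rintro (_ | x)
  · exact hm_root.reachable
  · exact starReplace_reachable_some hT m x

theorem starReplace_edgeSet_subset :
    (starReplace T M).graph.edgeSet ⊆
      Sym2.map some '' (T.edgeSet \ Sym2.map (↑) '' (T.induce M).edgeSet) ∪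
        (fun m => s(none, some m)) '' M := by
  intro e he
  induction e with | _ a b
  rcases a with _ | x <;> rcases b with _ | y
  · exact he.elim
  · exact .inr ⟨y, he, rfl⟩
  · exact .inr ⟨x, he, Sym2.eq_swap⟩
  · refine .inl ⟨s(x, y), ⟨he.1, ?_⟩, rfl⟩
    rintro ⟨e', -, he'⟩
    have mem_of_mem : ∀ w ∈ s(x, y), w ∈ M := by
      rw [← he']
      intro w hw
      obtain ⟨m, -, rfl⟩ := Sym2.mem_map.mp hw
      exact m.2
    exact he.2 ⟨mem_of_mem x (Sym2.mem_mk_left x y), mem_of_mem y (Sym2.mem_mk_right x y)⟩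

theorem starReplace_ncard_edgeSet_le [Finite V] (hT : T.IsTree) (hM : (T.induce M).Connected) :
    (starReplace T M).graph.edgeSet.ncard ≤ Nat.card V := by
  set inner : Set (Sym2 V) := Sym2.map (↑) '' (T.induce M).edgeSet with inner_def
  have inner_subset : inner ⊆ T.edgeSet := by
    rintro _ ⟨e, he, rfl⟩
    induction e with | _ x y
    exact he
  have card_inner : M.ncard ≤ inner.ncard + 1 := by
    rw [inner_def, Set.ncard_image_of_injective _ (Sym2.map.injective Subtype.val_injective)]
    exact hM.card_vert_le_card_edgeSet_add_one
  have card_T : T.edgeSet.ncard + 1 = Nat.card V := (isTree_iff_connected_and_card.mp hT).2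
  have card_outer : (T.edgeSet \ inner).ncard + inner.ncard = T.edgeSet.ncard :=
    Set.ncard_sdiff_add_ncard_of_subset inner_subset
  have card_le : (starReplace T M).graph.edgeSet.ncard ≤ (T.edgeSet \ inner).ncard + M.ncard :=
    calc (starReplace T M).graph.edgeSet.ncard
      _ ≤ (Sym2.map some '' (T.edgeSet \ inner) ∪ (fun m => s(none, some m)) '' M).ncard :=
        Set.ncard_le_ncard starReplace_edgeSet_subset
      _ ≤ (Sym2.map some '' (T.edgeSet \ inner)).ncard +
            ((fun m => s(none, some m)) '' M).ncard := Set.ncard_union_le _ _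
      _ ≤ (T.edgeSet \ inner).ncard + M.ncard :=
        add_le_add (Set.ncard_image_le) (Set.ncard_image_le)
  lia

theorem starReplace_isTree [Finite V] (hT : T.IsTree) (hM : (T.induce M).Connected) :
    (starReplace T M).graph.IsTree := by
  have connected : (starReplace T M).graph.Connected :=
    starReplace_connected hT.connected (Set.nonempty_coe_sort.mp hM.nonempty)
  have card_option : Nat.card (starReplace T M).V = Nat.card V + 1 := Finite.card_option
  refine isTree_iff_connected_and_card.mpr
    ⟨connected, le_antisymm ?_ connected.card_vert_le_card_edgeSet_add_one⟩
  rw [card_option]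
  exact Nat.add_le_add_right (starReplace_ncard_edgeSet_le hT hM) 1

theorem adj_iff_starReplace_adj_or (hM : T.IsClique M) (x y : V) :
    T.Adj x y ↔ (starReplace T M).graph.Adj (some x) (some y) ∨ x ≠ y ∧
      (starReplace T M).graph.Adj none (some x) ∧ (starReplace T M).graph.Adj none (some y) := by
  change _ ↔ T.Adj x y ∧ ¬(x ∈ M ∧ y ∈ M) ∨ x ≠ y ∧ x ∈ M ∧ y ∈ M
  have adj_of_mem : x ∈ M → y ∈ M → x ≠ y → T.Adj x y := (hM · · ·)
  have ne_of_adj : T.Adj x y → x ≠ y := Adj.ne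
  tauto

/-- The extension of an automorphism of `T` preserving `M` to `starReplace T M`. -/
def starReplaceExtend (f : T ≃g T) (hf : ∀ x, f x ∈ M ↔ x ∈ M) : (starReplace T M).Aut :=
  ⟨⟨f.toEquiv.optionCongr, by
    rintro (_ | x) (_ | y)
    · rfl
    · exact hf y
    · exact hf x
    · exact and_congr f.map_adj_iff (not_congr (and_congr (hf x) (hf y)))⟩, rfl⟩

theorem some_removeNone_of_map_none {α β : Type*} {e : Option α ≃ Option β} (he : e none = none)
    (x : α) : some (e.removeNone x) = e (some x) := by
  refine e.removeNone_some (Option.ne_none_iff_exists'.mp fun h => ?_)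
  exact Option.some_ne_none x (e.injective (h.trans he.symm))

/-- The restriction of a root-fixing automorphism of `starReplace T M` to the vertices of `T`. -/
def starReplaceRestrict (hM : T.IsClique M) (h : (starReplace T M).Aut) : T ≃g T where
  toEquiv := h.1.toEquiv.removeNone
  map_rel_iff' {x y} := by
    have map_none : h.1 none = none := h.2
    have map_some (x : V) : some (h.1.toEquiv.removeNone x) = h.1 (some x) :=
      some_removeNone_of_map_none map_none x
    have adj_none_iff (x : V) : (starReplace T M).graph.Adj none (h.1 (some x)) ↔
        (starReplace T M).graph.Adj none (some x) := by
      simpa only [map_none] using h.1.map_adj_iff (v := none) (w := some x)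
    rw [adj_iff_starReplace_adj_or hM, adj_iff_starReplace_adj_or hM, map_some, map_some,
      h.1.map_adj_iff, adj_none_iff, adj_none_iff, (Equiv.injective _).ne_iff]

/-- If `M` is a clique invariant under all automorphisms of `T`, then `T` and the rooted graph
`starReplace T M` have the same automorphisms. -/
def autEquivStarReplaceAut (hM : T.IsClique M) (hinv : ∀ (f : T ≃g T) (x : V), f x ∈ M ↔ x ∈ M) :
    (T ≃g T) ≃* (starReplace T M).Aut where
  toFun f := starReplaceExtend f (hinv f)
  invFun := starReplaceRestrict hM
  left_inv f := RelIso.toEquiv_injective (Equiv.removeNone_optionCongr f.toEquiv)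
  right_inv h := by
    have map_none : h.1 none = none := h.2
    ext (_ | x) : 2
    · exact map_none.symm
    · exact some_removeNone_of_map_none map_none x
  map_mul' f g := by
    ext (_ | x) <;> rfl

theorem exists_rootedTree_aut_mulEquiv [Finite V] (hT : T.IsTree) :
    ∃ R : RootedGraph.{u}, Finite R.V ∧ R.graph.IsTree ∧ Nonempty ((T ≃g T) ≃* R.Aut) := by
  have clique : T.IsClique T.center := isClique_center_of_isTree hT
  have : Nonempty V := hT.connected.nonempty
  have : Nonempty T.center := center_nonempty.to_subtype
  have center_connected : (T.induce T.center).Connected := by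
    rw [induce_eq_top.mpr clique]
    exact connected_top
  exact ⟨starReplace T T.center, inferInstance, starReplace_isTree hT center_connected,
    ⟨autEquivStarReplaceAut clique map_mem_center_iff⟩⟩

end StarReplace

/-- Every vertex of `S` has at least two neighbors in `S`: the subgraph induced on `S` has no leaves
and no isolated vertices. -/
def IsLeafless {V : Type*} (G : SimpleGraph V) (S : Set V) : Prop :=
  ∀ x ∈ S, ∃ y ∈ S, ∃ z ∈ S, y ≠ z ∧ G.Adj x y ∧ G.Adj x z

theorem IsLeafless.image {V W : Type*} {G : SimpleGraph V} {H : SimpleGraph W} {S : Set V}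
    (hS : IsLeafless G S) (f : G ↪g H) : IsLeafless H (f '' S) := by
  rintro _ ⟨x, hx, rfl⟩
  obtain ⟨y, hy, z, hz, hyz, hxy, hxz⟩ := hS x hx
  exact ⟨f y, ⟨y, hy, rfl⟩, f z, ⟨z, hz, rfl⟩, f.injective.ne hyz, f.map_adj_iff.mpr hxy,
    f.map_adj_iff.mpr hxz⟩

section RootedProduct

variable {κ : Type*} {C : SimpleGraph κ} {F : κ → RootedGraph.{u}}

/-- The embedding of the core into a rooted product as the set of roots. -/
def rootEmbedding (F : κ → RootedGraph.{u}) : κ ↪ Σ c, (F c).V where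
  toFun c := ⟨c, (F c).root⟩
  inj' _ _ h := congrArg Sigma.fst h

/-- The embedding of the fiber over `c` into a rooted product. -/
abbrev fiberEmbedding (F : κ → RootedGraph.{u}) (c : κ) : (F c).V ↪ Σ c, (F c).V :=
  Function.Embedding.sigmaMk (β := fun c => (F c).V) c

/-- The rooted product of Godsil and McKay: the core graph `C` with the rooted graph `F c` hung by
its root at every vertex `c`. -/
def rootedProduct (C : SimpleGraph κ) (F : κ → RootedGraph.{u}) : SimpleGraph (Σ c, (F c).V) :=
  C.map (rootEmbedding F) ⊔ ⨆ c, (F c).graph.map (fiberEmbedding F c)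

theorem rootedProduct_adj_iff {p q : Σ c, (F c).V} :
    (rootedProduct C F).Adj p q ↔
      (∃ c d, C.Adj c d ∧ rootEmbedding F c = p ∧ rootEmbedding F d = q) ∨
        ∃ c x y, (F c).graph.Adj x y ∧ ⟨c, x⟩ = p ∧ ⟨c, y⟩ = q := by
  simp only [rootedProduct, sup_adj, iSup_adj, map_adj, Function.Embedding.sigmaMk_apply]

theorem rootedProduct_adj_root_root {c d : κ} :
    (rootedProduct C F).Adj (rootEmbedding F c) (rootEmbedding F d) ↔ C.Adj c d := by
  rw [rootedProduct_adj_iff]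
  constructor
  · rintro (⟨_, _, hcd, hc, hd⟩ | ⟨b, x, y, hxy, hc, hd⟩)
    · rwa [(rootEmbedding F).injective hc, (rootEmbedding F).injective hd] at hcd
    · cases hc
      cases hd
      exact absurd rfl hxy.ne
  · exact fun h => .inl ⟨c, d, h, rfl, rfl⟩

theorem rootedProduct_adj_mk_mk {c : κ} {x y : (F c).V} :
    (rootedProduct C F).Adj ⟨c, x⟩ ⟨c, y⟩ ↔ (F c).graph.Adj x y := by
  rw [rootedProduct_adj_iff]
  constructor
  · rintro (⟨_, _, hcd, hc, hd⟩ | ⟨b, x, y, hxy, hc, hd⟩)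
    · cases hc
      cases hd
      exact absurd rfl hcd.ne
    · cases hc
      cases hd
      exact hxy
  · exact fun h => .inr ⟨c, x, y, h, rfl, rfl⟩

theorem rootedProduct_adj_mk_mk_of_ne {c d : κ} (hcd : c ≠ d) {x : (F c).V} {y : (F d).V} :
    (rootedProduct C F).Adj ⟨c, x⟩ ⟨d, y⟩ ↔
      C.Adj c d ∧ x = (F c).root ∧ y = (F d).root := by
  rw [rootedProduct_adj_iff]
  constructor
  · rintro (⟨_, _, hadj, hc, hd⟩ | ⟨b, _, _, -, hc, hd⟩)
    · cases hc
      cases hd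
      exact ⟨hadj, rfl, rfl⟩
    · cases hc
      cases hd
      exact absurd rfl hcd
  · rintro ⟨hadj, rfl, rfl⟩
    exact .inl ⟨c, d, hadj, rfl, rfl⟩

theorem eq_fst_of_rootedProduct_adj {p q : Σ c, (F c).V} (h : (rootedProduct C F).Adj p q)
    (hpq : p ∉ Set.range (rootEmbedding F) ∨ q ∉ Set.range (rootEmbedding F)) : p.1 = q.1 := by
  obtain ⟨c, d, -, rfl, rfl⟩ | ⟨c, x, y, -, rfl, rfl⟩ := rootedProduct_adj_iff.mp h
  · simp at hpq
  · rfl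

theorem rootedProduct_connected (hC : C.Connected) (hF : ∀ c, (F c).graph.Connected) :
    (rootedProduct C F).Connected := by
  let coreHom : C →g rootedProduct C F := ⟨rootEmbedding F, rootedProduct_adj_root_root.mpr⟩
  let fiberHom (c : κ) : (F c).graph →g rootedProduct C F :=
    ⟨fiberEmbedding F c, rootedProduct_adj_mk_mk.mpr⟩
  obtain ⟨c₀⟩ := hC.nonempty
  refine (connected_iff_exists_forall_reachable _).mpr ⟨rootEmbedding F c₀, ?_⟩
  rintro ⟨c, x⟩
  exact ((hC c₀ c).map coreHom).trans ((hF c (F c).root x).map (fiberHom c))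

theorem rootedProduct_edgeSet :
    (rootedProduct C F).edgeSet = (rootEmbedding F).sym2Map '' C.edgeSet ∪
      ⋃ c, (fiberEmbedding F c).sym2Map '' (F c).graph.edgeSet := by
  simp only [rootedProduct, edgeSet_sup, edgeSet_iSup, edgeSet_map]

theorem map_fst_sym2Map_rootEmbedding (e : Sym2 κ) :
    ((rootEmbedding F).sym2Map e).map Sigma.fst = e := by
  induction e with | _ c d
  rfl

theorem map_fst_sym2Map_fiberEmbedding {c : κ} (e : Sym2 (F c).V) :
    ((fiberEmbedding F c).sym2Map e).map Sigma.fst = s(c, c) := by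
  induction e with | _ x y
  rfl

theorem rootedProduct_ncard_edgeSet [Fintype κ] [∀ c, Finite (F c).V] :
    (rootedProduct C F).edgeSet.ncard =
      C.edgeSet.ncard + ∑ c, (F c).graph.edgeSet.ncard := by
  have core_disjoint : Disjoint ((rootEmbedding F).sym2Map '' C.edgeSet)
      (⋃ c, (fiberEmbedding F c).sym2Map '' (F c).graph.edgeSet) := by
    rw [Set.disjoint_iUnion_right]
    refine fun c => Set.disjoint_left.mpr ?_
    rintro _ ⟨e, he, rfl⟩ ⟨e', -, heq⟩
    have e_eq : s(c, c) = e := by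
      rw [← map_fst_sym2Map_fiberEmbedding e', heq, map_fst_sym2Map_rootEmbedding]
    exact C.loopless.irrefl c (e_eq ▸ he : s(c, c) ∈ C.edgeSet)
  have fibers_disjoint : Pairwise (Function.onFun Disjoint
      fun c => (fiberEmbedding F c).sym2Map '' (F c).graph.edgeSet) := by
    refine fun c d hcd => Set.disjoint_left.mpr ?_
    rintro _ ⟨e, -, rfl⟩ ⟨e', -, heq⟩
    have diag_eq : s(d, d) = s(c, c) := by
      rw [← map_fst_sym2Map_fiberEmbedding e', heq, map_fst_sym2Map_fiberEmbedding]
    exact hcd (Sym2.diag_injective diag_eq).symm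
  rw [rootedProduct_edgeSet, Set.ncard_union_eq core_disjoint,
    Set.ncard_iUnion_of_finite (fun _ => Set.toFinite _) fibers_disjoint, finsum_eq_sum_of_fintype]
  simp only [Set.ncard_image_of_injective _ (Function.Embedding.injective _)]

theorem rootedProduct_isBicyclic {κ : Type} [Finite κ] {C : SimpleGraph κ}
    {F : κ → RootedGraph.{0}} [∀ c, Finite (F c).V] (hC : C.IsBicyclic)
    (hF : ∀ c, (F c).graph.IsTree) : (rootedProduct C F).IsBicyclic := by
  have := Fintype.ofFinite κ
  refine ⟨rootedProduct_connected hC.1 fun c => (hF c).connected, ?_⟩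
  have card_fiber (c : κ) : Nat.card (F c).V = (F c).graph.edgeSet.ncard + 1 :=
    (isTree_iff_connected_and_card.mp (hF c)).2.symm
  rw [rootedProduct_ncard_edgeSet, hC.2, Nat.card_sigma]
  simp only [card_fiber, Finset.sum_add_distrib, Finset.sum_const, Finset.card_univ, smul_eq_mul,
    mul_one, Nat.card_eq_fintype_card]
  lia

theorem IsLeafless.subset_range_rootEmbedding [∀ c, Finite (F c).V]
    (hF : ∀ c, (F c).graph.IsTree) {S : Set (Σ c, (F c).V)}
    (hS : IsLeafless (rootedProduct C F) S) : S ⊆ Set.range (rootEmbedding F) := by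
  rintro ⟨c, x⟩ hx
  suffices Sigma.mk c ⁻¹' S ⊆ {(F c).root} from ⟨c, by rw [this hx]; rfl⟩
  refine subset_singleton_of_two_neighbors (hF c) _ fun x hx hxr => ?_
  have not_root : (⟨c, x⟩ : Σ c, (F c).V) ∉ Set.range (rootEmbedding F) := by
    rintro ⟨d, hd⟩
    cases hd
    exact hxr rfl
  obtain ⟨⟨d, y⟩, hy, ⟨e, z⟩, hz, hyz, hxy, hxz⟩ := hS _ hx
  obtain rfl : c = d := eq_fst_of_rootedProduct_adj hxy (.inl not_root)
  obtain rfl : c = e := eq_fst_of_rootedProduct_adj hxz (.inl not_root)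
  exact ⟨y, hy, z, hz, fun h => hyz (by rw [h]), rootedProduct_adj_mk_mk.mp hxy,
    rootedProduct_adj_mk_mk.mp hxz⟩

end RootedProduct

section RootedProductAut

variable {κ : Type*} {C : SimpleGraph κ} {F : κ → RootedGraph.{u}}

/-- The automorphism of a rooted product that permutes the fibers along an automorphism `σ` of the
core, mapping each fiber to its image by a root-preserving isomorphism. -/
def rootedProductCongr (σ : C ≃g C) (ψ : ∀ c, (F c).graph ≃g (F (σ c)).graph)
    (hψ : ∀ c, ψ c (F c).root = (F (σ c)).root) : rootedProduct C F ≃g rootedProduct C F where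
  toEquiv := .sigmaCongr (β₁ := fun c => (F c).V) (β₂ := fun c => (F c).V) σ.toEquiv
    fun c => (ψ c).toEquiv
  map_rel_iff' {p q} := by
    obtain ⟨⟨c, x⟩, ⟨d, y⟩⟩ := p, q
    change (rootedProduct C F).Adj ⟨σ c, ψ c x⟩ ⟨σ d, ψ d y⟩ ↔ _
    by_cases hcd : c = d
    · subst hcd
      exact rootedProduct_adj_mk_mk.trans ((ψ c).map_adj_iff.trans rootedProduct_adj_mk_mk.symm)
    · rw [rootedProduct_adj_mk_mk_of_ne hcd, rootedProduct_adj_mk_mk_of_ne (σ.injective.ne hcd),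
        σ.map_adj_iff, ← hψ, ← hψ, (ψ c).injective.eq_iff, (ψ d).injective.eq_iff]

variable [∀ c, Finite (F c).V]

theorem map_mem_range_rootEmbedding (hC : IsLeafless C Set.univ)
    (hF : ∀ c, (F c).graph.IsTree) (φ : rootedProduct C F ≃g rootedProduct C F)
    {p : Σ c, (F c).V} (hp : p ∈ Set.range (rootEmbedding F)) :
    φ p ∈ Set.range (rootEmbedding F) := by
  let coreEmbedding : C ↪g rootedProduct C F := ⟨rootEmbedding F, rootedProduct_adj_root_root⟩
  have range_leafless : IsLeafless (rootedProduct C F) (Set.range (rootEmbedding F)) :=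
    Set.image_univ ▸ hC.image coreEmbedding
  exact (range_leafless.image φ.toEmbedding).subset_range_rootEmbedding hF ⟨p, hp, rfl⟩

theorem map_mem_range_rootEmbedding_iff (hC : IsLeafless C Set.univ)
    (hF : ∀ c, (F c).graph.IsTree) (φ : rootedProduct C F ≃g rootedProduct C F)
    {p : Σ c, (F c).V} :
    φ p ∈ Set.range (rootEmbedding F) ↔ p ∈ Set.range (rootEmbedding F) :=
  ⟨fun h => φ.symm_apply_apply p ▸ map_mem_range_rootEmbedding hC hF φ.symm h,
    map_mem_range_rootEmbedding hC hF φ⟩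

theorem exists_coreIso_of_rootedProductIso (hC : IsLeafless C Set.univ)
    (hF : ∀ c, (F c).graph.IsTree) (φ : rootedProduct C F ≃g rootedProduct C F) :
    ∃ σ : C ≃g C, ∀ c, φ (rootEmbedding F c) = rootEmbedding F (σ c) := by
  have map_root (φ : rootedProduct C F ≃g rootedProduct C F) (c : κ) :
      ∃ d, rootEmbedding F d = φ (rootEmbedding F c) :=
    map_mem_range_rootEmbedding hC hF φ ⟨c, rfl⟩
  choose σ hσ using map_root φ
  choose τ hτ using map_root φ.symm
  refine ⟨⟨⟨σ, τ, fun c => ?_, fun c => ?_⟩, fun {c d} => ?_⟩, fun c => (hσ c).symm⟩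
  · apply (rootEmbedding F).injective
    rw [hτ, hσ, φ.symm_apply_apply]
  · apply (rootEmbedding F).injective
    rw [hσ, hτ, φ.apply_symm_apply]
  · rw [Equiv.coe_fn_mk, ← rootedProduct_adj_root_root (F := F), hσ, hσ, φ.map_adj_iff,
      rootedProduct_adj_root_root]

theorem fst_map_mk_eq_of_adj (hC : IsLeafless C Set.univ)
    (hF : ∀ c, (F c).graph.IsTree) (φ : rootedProduct C F ≃g rootedProduct C F)
    {c : κ} {x y : (F c).V} (h : (F c).graph.Adj x y) : (φ ⟨c, x⟩).1 = (φ ⟨c, y⟩).1 := by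
  refine eq_fst_of_rootedProduct_adj (φ.map_adj_iff.mpr (rootedProduct_adj_mk_mk.mpr h)) ?_
  rw [map_mem_range_rootEmbedding_iff hC hF, map_mem_range_rootEmbedding_iff hC hF, ← not_and_or]
  rintro ⟨⟨d, hx⟩, ⟨e, hy⟩⟩
  cases hx
  cases hy
  exact h.ne rfl

theorem fst_map_mk_eq (hC : IsLeafless C Set.univ)
    (hF : ∀ c, (F c).graph.IsTree) (φ : rootedProduct C F ≃g rootedProduct C F)
    (c : κ) (x y : (F c).V) : (φ ⟨c, x⟩).1 = (φ ⟨c, y⟩).1 := by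
  obtain ⟨w⟩ := (hF c).connected x y
  induction w with
  | nil => rfl
  | cons h _ ih => exact (fst_map_mk_eq_of_adj hC hF φ h).trans ih

theorem exists_fiberIso_of_rootedProductIso (hC : IsLeafless C Set.univ)
    (hF : ∀ c, (F c).graph.IsTree) (φ : rootedProduct C F ≃g rootedProduct C F) {σ : C ≃g C}
    (hσ : ∀ c, φ (rootEmbedding F c) = rootEmbedding F (σ c)) (c : κ) :
    ∃ ψ : (F c).graph ≃g (F (σ c)).graph, ∀ x, φ ⟨c, x⟩ = ⟨σ c, ψ x⟩ := by
  have fst_map (d : κ) (x : (F d).V) : (φ ⟨d, x⟩).1 = σ d :=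
    (fst_map_mk_eq hC hF φ d x (F d).root).trans (congrArg Sigma.fst (hσ d))
  have map_fiber (x : (F c).V) : ∃ y, φ ⟨c, x⟩ = ⟨σ c, y⟩ := by
    rw [← fst_map c x]
    exact ⟨_, rfl⟩
  choose ψ hψ using map_fiber
  have injective : Function.Injective ψ := fun x y h =>
    by
    have map_eq : φ ⟨c, x⟩ = φ ⟨c, y⟩ := by rw [hψ, hψ, h]
    exact (fiberEmbedding F c).injective (φ.injective map_eq)
  have surjective : Function.Surjective ψ := by
    intro y
    obtain ⟨⟨d, x⟩, hx⟩ := φ.surjective ⟨σ c, y⟩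
    obtain rfl : d = c := σ.injective (by rw [← fst_map d x, hx])
    exact ⟨x, (fiberEmbedding F _).injective ((hψ x).symm.trans hx)⟩
  refine ⟨⟨Equiv.ofBijective ψ ⟨injective, surjective⟩, fun {x y} => ?_⟩, hψ⟩
  change (F (σ c)).graph.Adj (ψ x) (ψ y) ↔ _
  rw [← rootedProduct_adj_mk_mk (C := C), ← hψ, ← hψ, φ.map_adj_iff,
    rootedProduct_adj_mk_mk]

theorem exists_eq_rootedProductCongr (hC : IsLeafless C Set.univ)
    (hF : ∀ c, (F c).graph.IsTree) (φ : rootedProduct C F ≃g rootedProduct C F) :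
    ∃ σ ψ hψ, φ = rootedProductCongr σ ψ hψ := by
  obtain ⟨σ, hσ⟩ := exists_coreIso_of_rootedProductIso hC hF φ
  choose ψ hψ using exists_fiberIso_of_rootedProductIso hC hF φ hσ
  refine ⟨σ, ψ, fun c => (fiberEmbedding F (σ c)).injective ((hψ c _).symm.trans (hσ c)), ?_⟩
  ext ⟨c, x⟩ : 1
  exact hψ c x

end RootedProductAut

section Theta

/-- The vertices of the theta graph whose two hubs are joined by paths of lengths 2, 3 and 3: the
hubs, the inner vertex of the short path, and the inner vertices of the long ones, where
`branch (i, j)` is the neighbor of `hub i` on the `j`-th long path. -/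
inductive ThetaVertex
  | hub (i : ZMod 2)
  | mid
  | branch (k : ZMod 2 × ZMod 2)
  deriving DecidableEq, Fintype

open ThetaVertex

/-- A relation generating `thetaGraph`: it gives each edge in at least one direction, and its loops
are discarded by `fromRel`. It is Boolean so that finite facts about the graph are decidable. -/
def thetaRel : ThetaVertex → ThetaVertex → Bool
  | hub _, mid => true
  | hub i, branch k => k.1 == i
  | branch k, branch l => k.2 == l.2
  | _, _ => false

/-- The theta graph whose two hubs are joined by paths of lengths 2, 3 and 3. -/
def thetaGraph : SimpleGraph ThetaVertex :=
  fromRel fun v w => thetaRel v w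

instance : DecidableRel thetaGraph.Adj :=
  inferInstanceAs (DecidableRel (fromRel fun v w => thetaRel v w = true).Adj)

theorem thetaGraph_adj_hub_mid (i : ZMod 2) : thetaGraph.Adj (hub i) mid := by
  revert i
  decide

theorem thetaGraph_adj_hub_branch_iff {i : ZMod 2} {k : ZMod 2 × ZMod 2} :
    thetaGraph.Adj (hub i) (branch k) ↔ k.1 = i := by
  revert i k
  decide

theorem thetaGraph_adj_branch_branch_iff {k l : ZMod 2 × ZMod 2} :
    thetaGraph.Adj (branch k) (branch l) ↔ k.1 ≠ l.1 ∧ k.2 = l.2 := by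
  revert k l
  decide

theorem thetaGraph_degree_eq_three_iff {v : ThetaVertex} :
    thetaGraph.degree v = 3 ↔ ∃ i, v = hub i := by
  revert v
  decide

theorem eq_mid_of_forall_thetaGraph_adj_hub {v : ThetaVertex}
    (hv : ∀ i, thetaGraph.Adj (hub i) v) : v = mid := by
  revert v
  decide

theorem exists_eq_branch_of_thetaGraph_adj_hub {v : ThetaVertex} {i : ZMod 2}
    (hv : thetaGraph.Adj (hub i) v) (hmid : v ≠ mid) : ∃ j, v = branch (i, j) := by
  revert v i
  decide

theorem thetaGraph_connected : thetaGraph.Connected := by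
  have mid_hub (i : ZMod 2) : thetaGraph.Reachable mid (hub i) :=
    (thetaGraph_adj_hub_mid i).symm.reachable
  refine (connected_iff_exists_forall_reachable _).mpr ⟨mid, fun v => ?_⟩
  cases v with
  | hub i => exact mid_hub i
  | mid => rfl
  | branch k => exact (mid_hub k.1).trans (thetaGraph_adj_hub_branch_iff.mpr rfl).reachable

theorem thetaGraph_isBicyclic : thetaGraph.IsBicyclic := by
  refine ⟨thetaGraph_connected, ?_⟩
  rw [Set.ncard_eq_toFinset_card', Nat.card_eq_fintype_card]
  decide

theorem thetaGraph_isLeafless : IsLeafless thetaGraph Set.univ := by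
  unfold IsLeafless
  decide

/-- The automorphism of the theta graph translating the indices of its vertices by `t`. -/
def thetaShift (t : ZMod 2 × ZMod 2) : thetaGraph ≃g thetaGraph where
  toFun
    | hub i => hub (t.1 + i)
    | mid => mid
    | branch k => branch (t + k)
  invFun
    | hub i => hub (-t.1 + i)
    | mid => mid
    | branch k => branch (-t + k)
  left_inv v := by cases v <;> simp only [neg_add_cancel_left]
  right_inv v := by cases v <;> simp only [add_neg_cancel_left]
  map_rel_iff' {v w} := by
    revert t v w
    decide

theorem eq_add_of_injective_zmod_two {f : ZMod 2 → ZMod 2} (hf : Function.Injective f)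
    (i : ZMod 2) : f i = f 0 + i := by
  have f_ne : f 1 ≠ f 0 := hf.ne (by decide)
  revert f i
  decide

variable (σ : thetaGraph ≃g thetaGraph)

theorem exists_thetaGraphIso_hub_eq_add : ∃ a, ∀ i, σ (hub i) = hub (a + i) := by
  have map_hub (i : ZMod 2) : ∃ j, σ (hub i) = hub j := by
    rw [← thetaGraph_degree_eq_three_iff, σ.degree_eq, thetaGraph_degree_eq_three_iff]
    exact ⟨i, rfl⟩
  choose h hh using map_hub
  have h_injective : Function.Injective h := fun i j hij => by
    have map_eq : σ (hub i) = σ (hub j) := by rw [hh, hh, hij]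
    exact hub.inj (σ.injective map_eq)
  exact ⟨h 0, fun i => by rw [hh, ← eq_add_of_injective_zmod_two h_injective]⟩

theorem thetaGraphIso_mid : σ mid = mid := by
  obtain ⟨a, ha⟩ := exists_thetaGraphIso_hub_eq_add σ
  refine eq_mid_of_forall_thetaGraph_adj_hub fun i => ?_
  rw [← add_neg_cancel_left a i, ← ha, σ.map_adj_iff]
  exact thetaGraph_adj_hub_mid _

theorem exists_thetaGraphIso_branch_eq_add {a : ZMod 2} (ha : ∀ i, σ (hub i) = hub (a + i)) :
    ∃ b, ∀ k, σ (branch k) = branch ((a, b) + k) := by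
  have map_branch (i j : ZMod 2) : ∃ l, σ (branch (i, j)) = branch (a + i, l) := by
    apply exists_eq_branch_of_thetaGraph_adj_hub
    · rw [← ha, σ.map_adj_iff, thetaGraph_adj_hub_branch_iff]
    · rw [← thetaGraphIso_mid σ]
      exact σ.injective.ne nofun
  choose l hl using map_branch
  have l_injective : Function.Injective (l 0) := fun i j hij => by
    have map_eq : σ (branch (0, i)) = σ (branch (0, j)) := by rw [hl, hl, hij]
    exact (Prod.mk.inj (branch.inj (σ.injective map_eq))).2
  have l_eq (i j : ZMod 2) : l i j = l 0 j := by
    by_cases hi : i = 0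
    · rw [hi]
    · have hadj : thetaGraph.Adj (σ (branch (i, j))) (σ (branch (0, j))) :=
        σ.map_adj_iff.mpr (thetaGraph_adj_branch_branch_iff.mpr ⟨hi, rfl⟩)
      rw [hl, hl, thetaGraph_adj_branch_branch_iff] at hadj
      exact hadj.2
  refine ⟨l 0 0, fun (i, j) => ?_⟩
  rw [hl, l_eq, eq_add_of_injective_zmod_two l_injective]
  rfl

theorem exists_eq_thetaShift : ∃ t, σ = thetaShift t := by
  obtain ⟨a, ha⟩ := exists_thetaGraphIso_hub_eq_add σ
  obtain ⟨b, hb⟩ := exists_thetaGraphIso_branch_eq_add σ ha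
  refine ⟨(a, b), ?_⟩
  ext (i | _ | k)
  · exact ha i
  · exact thetaGraphIso_mid σ
  · exact hb k

end Theta

section ThetaProduct

open ThetaVertex

/-- The rooted graph with a single vertex. -/
def RootedGraph.point : RootedGraph.{0} := ⟨Unit, ⊥, ()⟩

/-- The rooted graphs hung on the theta graph: `A` at the inner vertex of the short path, a copy of
`B` at each inner vertex of the long ones, and nothing at the hubs. -/
def thetaFiber (A B : RootedGraph.{0}) : ThetaVertex → RootedGraph.{0}
  | hub _ => .point
  | mid => A
  | branch _ => B

variable {A B : RootedGraph.{0}}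

theorem thetaFiber_isTree (hA : A.graph.IsTree) (hB : B.graph.IsTree) (v : ThetaVertex) :
    (thetaFiber A B v).graph.IsTree := by
  cases v with
  | hub => exact IsTree.of_subsingleton (V := Unit)
  | mid => exact hA
  | branch => exact hB

instance [Finite A.V] [Finite B.V] (v : ThetaVertex) : Finite (thetaFiber A B v).V := by
  cases v with
  | hub => exact inferInstanceAs (Finite Unit)
  | mid => exact inferInstanceAs (Finite A.V)
  | branch => exact inferInstanceAs (Finite B.V)

/-- The automorphism of the theta graph with hung rooted graphs that translates its indices by
`w.right` and afterwards acts by `a` on `A` and by `w.left k` on the `k`-th copy of `B`. -/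
def thetaProductAut (a : A.Aut) (w : wreathK4 B.Aut) :
    rootedProduct thetaGraph (thetaFiber A B) ≃g rootedProduct thetaGraph (thetaFiber A B) :=
  rootedProductCongr (thetaShift w.right.toAdd)
    (fun
      | hub _ => .refl
      | mid => a.1
      | branch k => (w.left (w.right.toAdd + k)).1)
    (fun
      | hub _ => rfl
      | mid => a.2
      | branch k => (w.left (w.right.toAdd + k)).2)

/-- The vertex `x` of the `k`-th copy of `B`. Unlike that of `Sigma.mk (branch k)`, the
type of `x` does not mention `k`, which allows rewriting `k`. -/
def branchVertex (A : RootedGraph.{0}) (k : ZMod 2 × ZMod 2) (x : B.V) :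
    Σ v, (thetaFiber A B v).V :=
  ⟨branch k, x⟩

theorem branchVertex_inj {k l : ZMod 2 × ZMod 2} {x y : B.V} :
    branchVertex A k x = branchVertex A l y ↔ k = l ∧ x = y := by
  constructor
  · rintro ⟨⟩
    exact ⟨rfl, rfl⟩
  · rintro ⟨rfl, rfl⟩
    rfl

theorem thetaProductAut_branchVertex (a : A.Aut) (w : wreathK4 B.Aut) (k : ZMod 2 × ZMod 2)
    (x : B.V) : thetaProductAut a w (branchVertex A k x) =
      branchVertex A (w.right.toAdd + k) ((w.left (w.right.toAdd + k)).1 x) :=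
  rfl

theorem thetaProductAut_mul_branchVertex (a b : A.Aut) (w z : wreathK4 B.Aut)
    (k : ZMod 2 × ZMod 2) (x : B.V) :
    thetaProductAut (a * b) (w * z) (branchVertex A k x) =
      thetaProductAut a w (thetaProductAut b z (branchVertex A k x)) := by
  have right_mul : (w * z).right.toAdd + k = w.right.toAdd + (z.right.toAdd + k) := add_assoc _ _ k
  have left_mul (l : ZMod 2 × ZMod 2) :
      (w * z).left (w.right.toAdd + l) = w.left (w.right.toAdd + l) * z.left l :=
    congrArg (w.left _ * z.left ·) (neg_add_cancel_left _ l)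
  simp only [thetaProductAut_branchVertex, right_mul, left_mul]
  rfl

theorem thetaProductAut_mul (a b : A.Aut) (w z : wreathK4 B.Aut) :
    thetaProductAut (a * b) (w * z) = thetaProductAut a w * thetaProductAut b z := by
  ext ⟨i | _ | k, x⟩ : 1
  · exact congrArg (fun i => (⟨hub i, x⟩ : Σ v, (thetaFiber A B v).V)) (add_assoc _ _ i)
  · rfl
  · exact thetaProductAut_mul_branchVertex a b w z k x

/-- `thetaProductAut` as a group homomorphism from `Aut(A) × (Aut(B) ≀ (Z₂ × Z₂))`. -/
def thetaProductHom (A B : RootedGraph.{0}) : A.Aut × wreathK4 B.Aut →*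
    (rootedProduct thetaGraph (thetaFiber A B) ≃g rootedProduct thetaGraph (thetaFiber A B)) :=
  .mk' (fun p => thetaProductAut p.1 p.2) fun _ _ => thetaProductAut_mul _ _ _ _

theorem thetaProductHom_injective : Function.Injective (thetaProductHom A B) := by
  rintro ⟨a, w⟩ ⟨b, z⟩ h
  have map_eq (p) : thetaProductAut a w p = thetaProductAut b z p := DFunLike.congr_fun h p
  have branch_eq (k : ZMod 2 × ZMod 2) (x : B.V) : w.right.toAdd + k = z.right.toAdd + k ∧
      (w.left (w.right.toAdd + k)).1 x = (z.left (z.right.toAdd + k)).1 x :=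
    branchVertex_inj.mp (map_eq (branchVertex A k x))
  have a_eq : a = b := by
    ext x
    exact (fiberEmbedding (thetaFiber A B) mid).injective (map_eq ⟨mid, x⟩)
  have right_eq : w.right = z.right := 
    Multiplicative.toAdd.injective (add_right_cancel (branch_eq 0 B.root).1)
  have left_eq : w.left = z.left := by
    ext k x
    simpa [right_eq] using (branch_eq (-w.right.toAdd + k) x).2
  rw [a_eq, SemidirectProduct.ext left_eq right_eq]

theorem thetaProductHom_surjective [Finite A.V] [Finite B.V] (hA : A.graph.IsTree)
    (hB : B.graph.IsTree) : Function.Surjective (thetaProductHom A B) := by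
  intro φ
  obtain ⟨σ, ψ, hψ, rfl⟩ :=
    exists_eq_rootedProductCongr thetaGraph_isLeafless (thetaFiber_isTree hA hB) φ
  obtain ⟨t, rfl⟩ := exists_eq_thetaShift σ
  let a : A.Aut := ⟨ψ mid, hψ mid⟩
  let g (k : ZMod 2 × ZMod 2) : B.Aut := ⟨ψ (branch (-t + k)), hψ (branch (-t + k))⟩
  refine ⟨(a, ⟨g, .ofAdd t⟩), ?_⟩
  ext ⟨i | _ | k, x⟩ : 1
  · rfl
  · rfl
  · let ψ_branch (l : ZMod 2 × ZMod 2) : B.V → B.V := ψ (branch l)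
    exact congrArg (fun l => branchVertex A (t + k) (ψ_branch l x)) (neg_add_cancel_left t k)

/-- The isomorphism of wreath products induced by an isomorphism of the base groups. -/
def wreathK4Congr {D E : Type} [Group D] [Group E] (e : D ≃* E) : wreathK4 D ≃* wreathK4 E :=
  SemidirectProduct.congr (MulEquiv.piCongrRight fun _ => e) (.refl _) fun _ => rfl

end ThetaProduct

/-- For all finite trees `Ψ` and `T` there is a bicyclic graph `Δ` with
`Aut(Δ) ≅ Aut(Ψ) × (Aut(T) ≀ (Z₂ × Z₂))`, where `Aut(T) ≀ (Z₂ × Z₂) = Aut(T)⁴ ⋊ (Z₂ × Z₂)`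
with `Z₂ × Z₂` permuting the four coordinates (indexed by its own elements) by translation. -/
theorem B1_realizable_as_aut_bicyclic
    {U V : Type} [Fintype U] [Fintype V]
    (Ψ : SimpleGraph U) (hΨ : Ψ.IsTree) (T : SimpleGraph V) (hT : T.IsTree) :
    ∃ (W : Type) (_ : Fintype W) (Δ : SimpleGraph W),
      Δ.IsBicyclic ∧ Nonempty ((Δ ≃g Δ) ≃* (Ψ ≃g Ψ) × wreathK4 (T ≃g T)) := by
  obtain ⟨A, _, hA, ⟨eA⟩⟩ := exists_rootedTree_aut_mulEquiv hΨ
  obtain ⟨B, _, hB, ⟨eB⟩⟩ := exists_rootedTree_aut_mulEquiv hT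
  let e := MulEquiv.ofBijective (thetaProductHom A B)
    ⟨thetaProductHom_injective, thetaProductHom_surjective hA hB⟩
  exact ⟨_, .ofFinite _, rootedProduct thetaGraph (thetaFiber A B),
    rootedProduct_isBicyclic thetaGraph_isBicyclic (thetaFiber_isTree hA hB),
    ⟨((eA.prodCongr (wreathK4Congr eB)).trans e).symm⟩⟩
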